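/- Let s be a complex number with Re(s) > 1. Then ∫_{0 ↗ 1} (e^{iπu²}·u^{-s}/(e^{iπu} - e^{-iπu})) du = (2π)^{s/2}·e^{iπ(s+1)/4}·(1/Γ(s))·∫_{-1/2 ↘ 1/2} (e^{-iπu²}/(e^{-2πiu} + 1))·(∫_0^∞ e^{-w²/2 - √(2π)·e^{iπ/4}·u·w}·w^{s-1} dw) du. (The inner integral over w equals Γ(s)·e^{iπu²/2}·U(s-1/2, √(2π)e^{iπ/4}u), where U is the parabolic cylinder function, so this is the representation F(s) = 2^{s/2}Γ(s/2)e^{-iπ(1-s)/4}·∫_{-1/2 ↘ 1/2} (e^{-iπu²/2 + iπu}/(2i cos(πu)))·U(s-1/2, √(2π)e^{iπ/4}u) du after multiplying both sides by π^{-s/2}Γ(s/2) and reversing the orientation of the path on the left.) -/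

import Mathlib

open scoped Real
open MeasureTheory Set Complex

/-- Integral along the straight line `t ↦ c + e^{iθ} t`, `t ∈ ℝ`. -/
noncomputable def lineInt (c θ : ℝ) (f : ℂ → ℂ) : ℂ :=
  ∫ t : ℝ, f ((c : ℂ) + Complex.exp ((θ : ℂ) * Complex.I) * (t : ℂ)) *
    Complex.exp ((θ : ℂ) * Complex.I)

set_option linter.all false

noncomputable def rr : ℝ := Real.sqrt 2 / 2
noncomputable def EE : ℂ := ⟨rr, rr⟩
noncomputable def EF : ℂ := ⟨rr, -rr⟩
lemma rr_pos : 0 < rr := by unfold rr; positivity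
lemma rr_sq : rr * rr = 1/2 := by
  unfold rr; nlinarith [Real.mul_self_sqrt (show (0:ℝ) ≤ 2 by norm_num)]
@[simp] lemma EE_re : EE.re = rr := rfl
@[simp] lemma EE_im : EE.im = rr := rfl
@[simp] lemma EF_re : EF.re = rr := rfl
@[simp] lemma EF_im : EF.im = -rr := rfl
lemma EE_mul_EF : EE * EF = 1 := by
  apply Complex.ext <;> simp <;> linarith [rr_sq]
lemma EE_sq : EE ^ 2 = I := by
  rw [pow_two]; apply Complex.ext <;> simp <;> linarith [rr_sq]
lemma EF_sq : EF ^ 2 = -I := by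
  rw [pow_two]; apply Complex.ext <;> simp <;> linarith [rr_sq]
lemma I_mul_EF : I * EF = EE := by
  apply Complex.ext <;> simp
lemma exp_EE : Complex.exp (((π/4 : ℝ) : ℂ) * I) = EE := by
  rw [Complex.exp_mul_I]
  apply Complex.ext
  · simp [← Complex.ofReal_cos, ← Complex.ofReal_sin, -Complex.ofReal_div, rr]
  · simp [← Complex.ofReal_cos, ← Complex.ofReal_sin, -Complex.ofReal_div, rr]
lemma exp_EE' : Complex.exp ((π : ℂ) * I / 4) = EE := by
  rw [← exp_EE]; congr 1; push_cast; ring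
lemma exp_EF : Complex.exp (((-(π/4) : ℝ) : ℂ) * I) = EF := by
  have h : Complex.exp (((-(π/4) : ℝ) : ℂ) * I) * EE = 1 := by
    rw [← exp_EE, ← Complex.exp_add]; simp
  calc _ = Complex.exp (((-(π/4) : ℝ) : ℂ) * I) * EE * EF := by rw [mul_assoc, EE_mul_EF, mul_one]
    _ = EF := by rw [h, one_mul]
lemma EE_ne : EE ≠ 0 := left_ne_zero_of_mul_eq_one EE_mul_EF

/-- lower bound from compactness -/
lemma exists_lower (f : ℝ → ℝ) (hf : Continuous f) (hpos : ∀ t, 0 < f t)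
    (hl : ∀ t, 1 ≤ |t| → 1/2 ≤ f t) : ∃ δ > 0, ∀ t, δ ≤ f t := by
  obtain ⟨x, hx, hm⟩ := (isCompact_Icc (a := (-1:ℝ)) (b := 1)).exists_isMinOn
    ⟨0, by simp⟩ hf.continuousOn
  refine ⟨min (f x) (1/2), lt_min (hpos x) (by norm_num), fun t => ?_⟩
  by_cases h : |t| ≤ 1
  · exact (min_le_left _ _).trans (hm (abs_le.1 h))
  · exact (min_le_right _ _).trans (hl t (not_le.1 h).le)

/-- the denominator -/
noncomputable def DD (u : ℂ) : ℂ :=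
  Complex.exp ((π : ℂ) * Complex.I * u) - Complex.exp (-((π : ℂ) * Complex.I * u))

lemma DD_continuous : Continuous DD := by unfold DD; fun_prop

lemma DD_eq_zero {u : ℂ} (h : DD u = 0) : ∃ n : ℤ, u = n := by
  have h1 : Complex.exp (2 * π * I * u) = 1 := by
    have h2 : Complex.exp ((π : ℂ) * Complex.I * u) = Complex.exp (-((π : ℂ) * Complex.I * u)) :=
      sub_eq_zero.1 h
    calc Complex.exp (2 * π * I * u)
        = Complex.exp ((π : ℂ) * Complex.I * u) * Complex.exp ((π : ℂ) * Complex.I * u) := by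
          rw [← Complex.exp_add]; congr 1; ring
      _ = Complex.exp (-((π : ℂ) * Complex.I * u)) * Complex.exp ((π : ℂ) * Complex.I * u) := by
          rw [h2]
      _ = 1 := by rw [← Complex.exp_add]; simp
  obtain ⟨n, hn⟩ := Complex.exp_eq_one_iff.1 h1
  refine ⟨n, ?_⟩
  have h3 : (2 * π * I : ℂ) ≠ 0 := by simp [Real.pi_ne_zero]
  exact mul_left_cancel₀ h3 (by rw [hn]; ring)

lemma DD_lower (u : ℂ) : Real.exp (π * |u.im|) - Real.exp (-(π * |u.im|)) ≤ ‖DD u‖ := by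
  have h1 : ‖Complex.exp ((π : ℂ) * Complex.I * u)‖ = Real.exp (-(π * u.im)) := by
    rw [Complex.norm_exp]; simp
  have h2 : ‖Complex.exp (-((π : ℂ) * Complex.I * u))‖ = Real.exp (π * u.im) := by
    rw [Complex.norm_exp]; simp
  have h3 := abs_norm_sub_norm_le (Complex.exp ((π : ℂ) * Complex.I * u)) (Complex.exp (-((π : ℂ) * Complex.I * u)))
  rw [h1, h2] at h3
  refine le_trans ?_ h3
  rcases abs_cases u.im with ⟨h, _⟩ | ⟨h, _⟩ <;> rw [h]
  · rw [abs_sub_comm]; exact le_abs_self _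
  · rw [mul_neg, neg_neg]; exact le_abs_self _

lemma exp_neg_le_half {x : ℝ} (h : 1 ≤ x) : Real.exp (-x) ≤ 1/2 := by
  rw [Real.exp_neg, inv_eq_one_div]
  apply one_div_le_one_div_of_le (by norm_num)
  linarith [Real.add_one_le_exp x]

lemma pi_rr : 2 ≤ π * rr := by
  have : (1.4:ℝ) ≤ √2 := by apply Real.le_sqrt_of_sq_le; norm_num
  unfold rr
  nlinarith [Real.pi_gt_three]

lemma DD_line_ne (c : ℝ) (hc : 0 < c) (hc' : c < 1) (t : ℝ) : DD (c + EE * t) ≠ 0 := by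
  intro h
  obtain ⟨n, hn⟩ := DD_eq_zero h
  have h1 := congrArg Complex.im hn
  have h2 := congrArg Complex.re hn
  simp [rr_pos.ne'] at h1
  simp [h1] at h2
  have h3 : (0:ℤ) < n := by exact_mod_cast (h2 ▸ hc)
  have h4 : n < (1:ℤ) := by exact_mod_cast (h2 ▸ hc')
  omega

lemma DD_line (c : ℝ) (hc : 0 < c) (hc' : c < 1) :
    ∃ δ > 0, ∀ t : ℝ, δ * Real.exp (π * rr * |t|) ≤ ‖DD (c + EE * t)‖ := by
  obtain ⟨δ, hδ, h⟩ := exists_lower (fun t => ‖DD (c + EE * t)‖ * Real.exp (-(π * rr * |t|)))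
    (by have := DD_continuous; fun_prop)
    (fun t => mul_pos (norm_pos_iff.2 (DD_line_ne c hc hc' t)) (Real.exp_pos _))
    (by
      intro t ht
      have h1 := DD_lower (c + EE * t)
      have h2 : |(c + EE * t : ℂ).im| = rr * |t| := by
        simp [abs_mul, abs_of_pos rr_pos]
      rw [h2] at h1
      calc (1/2 : ℝ) ≤ 1 - Real.exp (-(2 * (π * rr * |t|))) := by
            have := exp_neg_le_half (x := 2 * (π * rr * |t|)) (by nlinarith [pi_rr])
            linarith
        _ = (Real.exp (π * (rr * |t|)) - Real.exp (-(π * (rr * |t|)))) * Real.exp (-(π * rr * |t|)) := by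
            rw [sub_mul, ← Real.exp_add, ← Real.exp_add]
            congr 1
            · rw [← Real.exp_zero]; congr 1; ring
            · congr 1; ring
        _ ≤ _ := by gcongr)
  refine ⟨δ, hδ, fun t => ?_⟩
  have := h t
  rw [Real.exp_neg, ← div_eq_mul_inv, le_div_iff₀ (Real.exp_pos _)] at this
  exact this

lemma den2_ne (c : ℝ) (h₁ : -(1/2) < c) (h₂ : c < 1/2) (x : ℝ) :
    Complex.exp (-(2 * (π : ℂ) * Complex.I * (c + EF * x))) + 1 ≠ 0 := by
  intro h
  have h0 : DD ((c + EF * x) + 1/2) = 0 := by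
    have e1 : Complex.exp ((π : ℂ) * Complex.I * ((c + EF * x) + 1/2)) =
        I * Complex.exp ((π : ℂ) * Complex.I * (c + EF * x)) := by
      have : Complex.exp (π / 2 * I) = I := Complex.exp_pi_div_two_mul_I
      rw [show (π : ℂ) * Complex.I * ((c + EF * x) + 1/2) =
        π / 2 * I + (π : ℂ) * Complex.I * (c + EF * x) by ring, Complex.exp_add, this]
    have e2 : Complex.exp (-((π : ℂ) * Complex.I * ((c + EF * x) + 1/2))) =
        - I * Complex.exp (-((π : ℂ) * Complex.I * (c + EF * x))) := by
      have : Complex.exp (-π / 2 * I) = -I := Complex.exp_neg_pi_div_two_mul_I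
      rw [show -((π : ℂ) * Complex.I * ((c + EF * x) + 1/2)) =
        -π / 2 * I + -((π : ℂ) * Complex.I * (c + EF * x)) by ring, Complex.exp_add, this]
    have e3 : Complex.exp (-((π : ℂ) * Complex.I * (c + EF * x))) =
       Complex.exp ((π : ℂ) * Complex.I * (c + EF * x)) * Complex.exp (-(2 * (π : ℂ) * Complex.I * (c + EF * x))) := by
      rw [← Complex.exp_add]; congr 1; ring
    unfold DD
    rw [e1, e2, e3]
    linear_combination I * Complex.exp ((π : ℂ) * Complex.I * (c + EF * x)) * h
  obtain ⟨n, hn⟩ := DD_eq_zero h0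
  have h1 := congrArg Complex.im hn
  have h2 := congrArg Complex.re hn
  simp [rr_pos.ne'] at h1
  simp [h1] at h2
  have h3 : (0:ℤ) < n := by 
    have : (0:ℝ) < n := by rw [← h2]; linarith
    exact_mod_cast this
  have h4 : n < (1:ℤ) := by 
    have : (n:ℝ) < 1 := by rw [← h2]; linarith
    exact_mod_cast this
  omega

lemma den2_line (c : ℝ) (h₁ : -(1/2) < c) (h₂ : c < 1/2) :
    ∃ δ > 0, ∀ x : ℝ, δ * Real.exp (-(2 * π * rr * x)) ≤
      ‖Complex.exp (-(2 * (π : ℂ) * Complex.I * (c + EF * x))) + 1‖ := by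
  obtain ⟨δ, hδ, h⟩ := exists_lower
    (fun x => ‖Complex.exp (-(2 * (π : ℂ) * Complex.I * (c + EF * x))) + 1‖ *
      Real.exp (2 * π * rr * x))
    (by fun_prop)
    (fun t => mul_pos (norm_pos_iff.2 (den2_ne c h₁ h₂ t)) (Real.exp_pos _))
    (by
      intro t ht
      have h1 := abs_norm_sub_norm_le (Complex.exp (-(2 * (π : ℂ) * Complex.I * (c + EF * t)))) (-1)
      rw [sub_neg_eq_add, norm_neg, norm_one, Complex.norm_exp] at h1
      have h2 : (-(2 * (π : ℂ) * Complex.I * (c + EF * t))).re = -(2 * π * rr * t) := by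
        simp; ring
      rw [h2] at h1
      have h3 := Real.exp_pos (2 * π * rr * t)
      have h4 : Real.exp (-(2 * π * rr * t)) * Real.exp (2 * π * rr * t) = 1 := by
        rw [← Real.exp_add]; simp
      have h5 := mul_le_mul_of_nonneg_right h1 h3.le
      refine le_trans ?_ h5
      rcases le_abs.1 ht with h | h
      · have h6 : 1 ≤ 2 * π * rr * t := by nlinarith [pi_rr]
        have h7 := Real.add_one_le_exp (2 * π * rr * t)
        have h8 : -(Real.exp (-(2 * π * rr * t)) - 1) ≤ |Real.exp (-(2 * π * rr * t)) - 1| := neg_le_abs _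
        nlinarith
      · have h6 : 1 ≤ -(2 * π * rr * t) := by nlinarith [pi_rr]
        have h7 := exp_neg_le_half h6
        rw [neg_neg] at h7
        have h8 : (Real.exp (-(2 * π * rr * t)) - 1) ≤ |Real.exp (-(2 * π * rr * t)) - 1| := le_abs_self _
        nlinarith)
  refine ⟨δ, hδ, fun t => ?_⟩
  have := h t
  rw [Real.exp_neg, ← div_eq_mul_inv, div_le_iff₀ (Real.exp_pos _)]
  exact this

lemma ioi_int {q b : ℝ} (hq : -1 < q) (hb : 0 < b) :
    IntegrableOn (fun x : ℝ => x ^ q * Real.exp (-(b * x))) (Set.Ioi 0) := by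
  have := integrableOn_rpow_mul_exp_neg_mul_rpow (p := 1) hq one_pos hb
  simpa using this

lemma norm_kernel {a r : ℂ} {t : ℝ} (ht : 0 < t) :
    ‖(t : ℂ) ^ (a - 1) * Complex.exp (-(r * t))‖ = t ^ (a.re - 1) * Real.exp (-(r.re * t)) := by
  rw [norm_mul, Complex.norm_cpow_eq_rpow_re_of_pos ht, Complex.norm_exp]; simp

lemma laplace (a : ℂ) (ha : 0 < a.re) (r : ℂ) (hr : 0 < r.re) :
    ∫ t in Set.Ioi (0:ℝ), (t : ℂ) ^ (a - 1) * Complex.exp (-(r * t)) =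
      (1 / r) ^ a * Complex.Gamma a := by
  set U : Set ℂ := {z | 0 < z.re} with hU
  have hUo : IsOpen U := isOpen_lt continuous_const Complex.continuous_re
  have hUc : IsPreconnected U := (convex_halfSpace_re_gt 0).isPreconnected
  let f : ℂ → ℂ := fun r => ∫ t in Set.Ioi (0:ℝ), (t : ℂ) ^ (a - 1) * Complex.exp (-(r * t))
  let g : ℂ → ℂ := fun r => (1 / r) ^ a * Complex.Gamma a
  have hf : DifferentiableOn ℂ f U := by
    intro z hz
    have hz' : 0 < z.re := hz
    have key := hasDerivAt_integral_of_dominated_loc_of_deriv_le (𝕜 := ℂ)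
      (μ := volume.restrict (Set.Ioi (0:ℝ)))
      (F := fun (r : ℂ) (t : ℝ) => (t : ℂ) ^ (a - 1) * Complex.exp (-(r * t)))
      (F' := fun (r : ℂ) (t : ℝ) => (t : ℂ) ^ (a - 1) * (Complex.exp (-(r * t)) * (-(t:ℂ))))
      (x₀ := z) (s := {w | z.re / 2 < w.re})
      (bound := fun t => t ^ a.re * Real.exp (-(z.re / 2 * t)))
      ((isOpen_lt continuous_const Complex.continuous_re).mem_nhds
        (show z.re / 2 < z.re by linarith))
      (Filter.Eventually.of_forall fun w => by
        apply Measurable.aestronglyMeasurable; fun_prop)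
      (by
        refine Integrable.mono' (ioi_int (q := a.re - 1) (by linarith) hz')
          (by apply Measurable.aestronglyMeasurable; fun_prop) ?_
        filter_upwards [ae_restrict_mem measurableSet_Ioi] with t ht
        exact (norm_kernel ht).le)
      (by apply Measurable.aestronglyMeasurable; fun_prop)
      (by
        filter_upwards [ae_restrict_mem measurableSet_Ioi] with t ht w hw
        have ht' : 0 < t := ht
        have hw' : z.re / 2 < w.re := hw
        rw [← mul_assoc, norm_mul, norm_kernel ht, norm_neg, Complex.norm_real, Real.norm_eq_abs,
          abs_of_pos ht']
        have : t ^ a.re = t ^ (a.re - 1) * t := by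
          rw [Real.rpow_sub_one ht'.ne']; field_simp
        rw [this]
        have h2 : Real.exp (-(w.re * t)) ≤ Real.exp (-(z.re / 2 * t)) := by
          apply Real.exp_le_exp.2; nlinarith
        have h3 : 0 ≤ t ^ (a.re - 1) := by positivity
        calc _ = t ^ (a.re - 1) * t * Real.exp (-(w.re * t)) := by ring
          _ ≤ _ := by gcongr)
      (ioi_int (by linarith) (by linarith))
      (by
        refine Filter.Eventually.of_forall fun t w _ => ?_
        have h1 : HasDerivAt (fun r : ℂ => -(r * (t:ℂ))) (-(t:ℂ)) w := by
          exact (((hasDerivAt_id w).mul_const (t:ℂ)).neg).congr_deriv (by simp)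
        exact (h1.cexp).const_mul _)
    exact key.2.differentiableAt.differentiableWithinAt
  have hg : DifferentiableOn ℂ g U := by
    intro z hz
    have hz' : 0 < z.re := hz
    have hz0 : z ≠ 0 := by intro h; simp [h] at hz'
    have hs : 1 / z ∈ Complex.slitPlane := by
      left
      simp only [one_div, Complex.inv_re]
      exact div_pos hz' (Complex.normSq_pos.2 hz0)
    have h1 : DifferentiableAt ℂ (fun z : ℂ => 1 / z) z := by
      simpa using differentiableAt_inv hz0
    exact ((h1.cpow_const hs).mul_const _).differentiableWithinAt
  have h1 : (1 : ℂ) ∈ U := by simp [hU]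
  have hfr : ∃ᶠ z in nhdsWithin (1:ℂ) {1}ᶜ, f z = g z := by
    have ht : Filter.Tendsto (fun x : ℝ => (x : ℂ)) (nhdsWithin (1:ℝ) {1}ᶜ)
        (nhdsWithin (1:ℂ) {1}ᶜ) := by
      apply tendsto_nhdsWithin_of_tendsto_nhds_of_eventually_within
      · exact (Complex.continuous_ofReal.tendsto' 1 1 (by simp)).mono_left nhdsWithin_le_nhds
      · filter_upwards [self_mem_nhdsWithin] with x hx
        simpa using hx
    apply ht.frequently
    apply Filter.Eventually.frequently
    have : ∀ᶠ x : ℝ in nhds 1, 0 < x := lt_mem_nhds one_pos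
    filter_upwards [this.filter_mono nhdsWithin_le_nhds] with x hx
    exact Complex.integral_cpow_mul_exp_neg_mul_Ioi ha hx
  exact (hf.analyticOnNhd hUo).eqOn_of_preconnected_of_frequently_eq (hg.analyticOnNhd hUo)
    hUc h1 hfr hr


lemma gauss_lemma (a u : ℂ) :
    ∫ x : ℝ, Complex.exp (-((π : ℂ) * I * (a + EF * x) ^ 2) + 2 * π * I * u * (a + EF * x)) =
      Complex.exp ((π : ℂ) * I * u ^ 2) := by
  have hpi : (π : ℂ) ≠ 0 := by exact_mod_cast Real.pi_ne_zero
  have h := integral_cexp_quadratic (b := -(π:ℂ)) (by simp [Real.pi_pos])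
    (2 * π * I * EF * (u - a)) (-((π : ℂ) * I * a ^ 2) + 2 * π * I * u * a)
  rw [neg_neg, div_self hpi, Complex.one_cpow, one_mul] at h
  rw [show Complex.exp ((π : ℂ) * I * u ^ 2) = Complex.exp (-((π : ℂ) * I * a ^ 2) + 2 * π * I * u * a - (2 * π * I * EF * (u - a)) ^ 2 / (4 * -π)) from ?_, ← h]
  · congr 1; ext x; congr 1
    linear_combination (-π * I * x ^ 2) * EF_sq + (π * x ^ 2) * I_sq
  · congr 1
    field_simp
    linear_combination (-4 * I * (u - a) ^ 2) * EF_sq + (4 * (u - a) ^ 2) * I_sq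

lemma gauss_integrable (a u : ℂ) :
    Integrable fun x : ℝ => Complex.exp (-((π : ℂ) * I * (a + EF * x) ^ 2) + u * x) := by
  have h := integrable_cexp_quadratic' (b := -(π:ℂ)) (by simp [Real.pi_pos])
    (-2 * π * I * EF * a + u) (-((π : ℂ) * I * a ^ 2))
  refine h.congr (Filter.Eventually.of_forall fun x => ?_)
  simp only
  congr 1
  linear_combination (π * I * x ^ 2) * EF_sq - (π * x ^ 2) * I_sq

lemma gauss_integrable' (a : ℂ) :
    Integrable fun x : ℝ => Complex.exp ((π : ℂ) * I * (a + EE * x) ^ 2) := by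
  have h := integrable_cexp_quadratic' (b := -(π:ℂ)) (by simp [Real.pi_pos])
    (2 * π * I * EE * a) (((π : ℂ) * I * a ^ 2))
  refine h.congr (Filter.Eventually.of_forall fun x => ?_)
  simp only
  congr 1
  linear_combination (-π * I * x ^ 2) * EE_sq - (π * x ^ 2) * I_sq

lemma mellin_lemma (s : ℂ) (hs : 1 < s.re) (c : ℝ) (hc : 0 < c) (t : ℝ) :
    ((c : ℂ) + EE * t) ^ (-s) = (2 * (π : ℂ)) ^ (s / 2) * Complex.exp ((π : ℂ) * I * s / 4) *
      (Complex.Gamma s)⁻¹ * ∫ w in Set.Ioi (0 : ℝ), (w : ℂ) ^ (s - 1) *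
        Complex.exp (-((Real.sqrt (2 * π) : ℂ) * EE * (c + EE * t) * w)) := by
  have hb : 0 < Real.sqrt (2 * π) := by positivity
  set p : ℂ := EE * (c + EE * t) with hp
  have hpre : p.re = rr * c := by simp [hp]; ring
  have hp0 : 0 < p.re := by rw [hpre]; exact mul_pos rr_pos hc
  have hpne : p ≠ 0 := by intro h; simp [h] at hp0
  have hune : (c : ℂ) + EE * t ≠ 0 := right_ne_zero_of_mul hpne
  have hG : Complex.Gamma s ≠ 0 := Complex.Gamma_ne_zero_of_re_pos (by linarith)
  have hbp : 0 < ((Real.sqrt (2 * π) : ℂ) * p).re := by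
    rw [Complex.re_ofReal_mul]; positivity
  have hbpne : ((Real.sqrt (2 * π) : ℂ) * p) ≠ 0 := by intro h; rw [h] at hbp; simp at hbp
  have h1 := laplace s (by linarith) ((Real.sqrt (2 * π) : ℂ) * p) hbp
  have h2 : (∫ w in Set.Ioi (0 : ℝ), (w : ℂ) ^ (s - 1) *
        Complex.exp (-((Real.sqrt (2 * π) : ℂ) * EE * (c + EE * t) * w))) = 
        (1 / ((Real.sqrt (2 * π) : ℂ) * p)) ^ s * Complex.Gamma s := by
    rw [← h1]; simp only [hp, mul_assoc]
  have harg := Complex.abs_arg_lt_pi_div_two_iff.2 (Or.inl hp0)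
  rw [abs_lt] at harg
  have hlogu : Complex.log (c + EE * t) = Complex.log p - π / 4 * I := by
    have e : (c : ℂ) + EE * t = Complex.exp (Complex.log p - π / 4 * I) := by
      rw [Complex.exp_sub, Complex.exp_log hpne, eq_div_iff (Complex.exp_ne_zero _), hp, mul_comm,
        show (π / 4 * I : ℂ) = π * I / 4 by ring, exp_EE']
    rw [e, Complex.log_exp]
    · simp [Complex.log_im]; linarith [Real.pi_pos]
    · simp [Complex.log_im]; linarith [Real.pi_pos]
  have hlogb : Complex.log ((Real.sqrt (2 * π) : ℂ) * p) = Complex.log (2 * π) / 2 + Complex.log p := by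
    rw [Complex.log_ofReal_mul hb hpne, Real.log_sqrt (by positivity)]
    rw [show (2 * π : ℂ) = ((2 * π : ℝ) : ℂ) by push_cast; rfl, ← Complex.ofReal_log (by positivity)]
    push_cast; rfl
  have harg2 : Complex.arg ((Real.sqrt (2 * π) : ℂ) * p) ≠ π := by
    rw [Complex.arg_real_mul _ hb]; intro h; linarith [Real.pi_pos, harg.2]
  have h2pi : (2 * π : ℂ) ≠ 0 := by simp [Real.pi_ne_zero]
  rw [h2, one_div, Complex.inv_cpow _ _ harg2, ← Complex.cpow_neg, Complex.cpow_def_of_ne_zero hbpne,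
    hlogb, Complex.cpow_def_of_ne_zero hune, hlogu, Complex.cpow_def_of_ne_zero h2pi]
  rw [show ∀ A B C D : ℂ, A * B * C⁻¹ * (D * C) = A * B * D * (C⁻¹ * C) by intros; ring,
    inv_mul_cancel₀ hG, mul_one, ← Complex.exp_add, ← Complex.exp_add]
  congr 1; ring


lemma integrable_exp_neg_abs {k : ℝ} (hk : 0 < k) :
    Integrable fun t : ℝ => Real.exp (-(k * |t|)) := by
  rw [← integrableOn_univ, ← Set.Iic_union_Ioi (a := (0:ℝ))]
  apply IntegrableOn.union
  · refine (integrableOn_exp_mul_Iic hk 0).congr_fun (fun x hx => ?_) measurableSet_Iic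
    have hx' : x ≤ 0 := hx
    simp only [abs_of_nonpos hx']; congr 1; ring
  · refine (integrableOn_exp_mul_Ioi (a := -k) (by linarith) 0).congr_fun (fun x hx => ?_)
      measurableSet_Ioi
    have hx' : 0 < x := hx
    simp only [abs_of_pos hx']; congr 1; ring

lemma odd_integral {β : ℝ} (hβ : β ≠ 0) (T : ℝ) :
    ∫ x in (-T)..T, 1 / ((x : ℂ) + β * I) = -(2 * Real.arctan (T / β) : ℝ) * I := by
  have hne : ∀ x : ℝ, (x : ℂ) + β * I ≠ 0 := by
    intro x h
    have := congrArg Complex.im h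
    simp at this; exact hβ this
  have hcont : Continuous fun x : ℝ => 1 / ((x : ℂ) + β * I) := by
    fun_prop (disch := exact hne)
  have h1 : ∫ x in (-T)..T, 1 / (((-x : ℝ) : ℂ) + β * I) = ∫ x in (-T)..T, 1 / ((x : ℂ) + β * I) := by
    rw [intervalIntegral.integral_comp_neg (fun x : ℝ => 1 / ((x : ℂ) + β * I)), neg_neg]
  have h2 : (∫ x in (-T)..T, 1 / ((x : ℂ) + β * I)) + ∫ x in (-T)..T, 1 / (((-x : ℝ) : ℂ) + β * I) =
      ∫ x in (-T)..T, (-2 * I) * ((β / (β ^ 2 + x ^ 2) : ℝ) : ℂ) := by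
    have hcont2 : Continuous fun x : ℝ => 1 / (((-x : ℝ) : ℂ) + β * I) := hcont.comp continuous_neg
    rw [← intervalIntegral.integral_add (hcont.intervalIntegrable _ _)
      (hcont2.intervalIntegrable _ _)]
    congr 1; ext x
    have h3 := hne x
    have h4 := hne (-x)
    have h5 : (β ^ 2 + x ^ 2 : ℂ) ≠ 0 := by
      have : (β ^ 2 + x ^ 2 : ℝ) ≠ 0 := by positivity
      exact_mod_cast this
    push_cast at h4 ⊢
    rw [div_add_div _ _ h3 h4, mul_div_assoc', div_eq_div_iff (mul_ne_zero h3 h4) h5]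
    linear_combination (-2 * β * I * β ^ 2 * -1) * I_sq
  rw [h1, intervalIntegral.integral_const_mul, intervalIntegral.integral_ofReal,
    integral_div_sq_add_sq, neg_div, Real.arctan_neg] at h2
  have h6 : (2:ℂ) ≠ 0 := by norm_num
  apply mul_left_cancel₀ h6
  rw [two_mul, h2]; push_cast; ring

lemma strip_residue {a b : ℝ} (ha : 0 < a) (hb : 0 < b) (g : ℂ → ℂ) (U : Set ℂ) (hU : IsOpen U)
    (hsub : ∀ ζ : ℂ, -b ≤ ζ.im → ζ.im ≤ a → ζ ∈ U) (hg : DifferentiableOn ℂ g U)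
    (hbot : Integrable fun x : ℝ => g (x + (-b : ℝ) * I) / (x + (-b : ℝ) * I))
    (htop : Integrable fun x : ℝ => g (x + a * I) / (x + a * I))
    (B : ℝ → ℝ) (hB : Filter.Tendsto B Filter.atTop (nhds 0))
    (hvert : ∀ ζ : ℂ, -b ≤ ζ.im → ζ.im ≤ a → 2 ≤ |ζ.re| → ‖g ζ / ζ‖ ≤ B |ζ.re|) :
    (∫ x : ℝ, g (x + (-b : ℝ) * I) / (x + (-b : ℝ) * I)) - (∫ x : ℝ, g (x + a * I) / (x + a * I)) =
      2 * π * I * g 0 := by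
  have h0U : (0:ℂ) ∈ U := hsub 0 (by simp [hb.le]) (by simp [ha.le])
  have hH : DifferentiableOn ℂ (dslope g 0) U :=
    (Complex.differentiableOn_dslope (hU.mem_nhds h0U)).2 hg
  have hHne : ∀ ζ : ℂ, ζ ≠ 0 → dslope g 0 ζ = g ζ / ζ - g 0 * (1 / ζ) := by
    intro ζ hζ
    rw [dslope_of_ne _ hζ, slope_def_field, sub_zero]; ring
  have hne : ∀ β : ℝ, β ≠ 0 → ∀ x : ℝ, (x : ℂ) + β * I ≠ 0 := by
    intro β hβ x h
    have := congrArg Complex.im h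
    simp at this; exact hβ this
  have hline : ∀ β : ℝ, β ≠ 0 → Integrable (fun x : ℝ => g (x + β * I) / (x + β * I)) →
      ∀ T : ℝ, ∫ x in (-T)..T, dslope g 0 (x + β * I) =
       (∫ x in (-T)..T, g (x + β * I) / (x + β * I)) - g 0 * (-(2 * Real.arctan (T / β) : ℝ) * I) := by
    intro β hβ hi T
    have hcont : Continuous fun x : ℝ => 1 / ((x : ℂ) + β * I) := by
      have := hne β hβ
      fun_prop (disch := exact this)
    rw [← odd_integral hβ, ← intervalIntegral.integral_const_mul, ← intervalIntegral.integral_sub]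
    · congr 1; ext x; exact hHne _ (hne β hβ x)
    · exact hi.intervalIntegrable
    · exact (continuous_const.mul hcont).intervalIntegrable _ _
  let V : ℝ → ℂ := fun T => I • (∫ y in (-b)..a, dslope g 0 ((T:ℝ) + y * I)) -
      I • (∫ y in (-b)..a, dslope g 0 ((-T:ℝ) + y * I))
  have hV : Filter.Tendsto V Filter.atTop (nhds 0) := by
    have hbound : ∀ S T : ℝ, 2 ≤ T → |S| = T →
       ‖∫ y in (-b)..a, dslope g 0 ((S:ℝ) + y * I)‖ ≤ (B T + ‖g 0‖ * (1 / T)) * |a - (-b)| := by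
      intro S T hT hS
      apply intervalIntegral.norm_integral_le_of_norm_le_const
      intro y hy
      rw [Set.uIoc_of_le (by linarith)] at hy
      have hre : ((S:ℂ) + y * I).re = S := by simp
      have him : ((S:ℂ) + y * I).im = y := by simp
      have hζ : ((S:ℂ) + y * I) ≠ 0 := by
        intro h; rw [h] at hre; simp at hre; rw [← hre] at hS; simp at hS; linarith
      rw [hHne _ hζ]
      refine (norm_sub_le _ _).trans (add_le_add ?_ ?_)
      · have := hvert ((S:ℂ) + y * I) (by rw [him]; exact hy.1.le) (by rw [him]; exact hy.2)
          (by rw [hre, hS]; exact hT)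
        rwa [hre, hS] at this
      · rw [norm_mul]
        apply mul_le_mul_of_nonneg_left _ (norm_nonneg _)
        rw [norm_div, norm_one]
        apply one_div_le_one_div_of_le (by linarith)
        have := Complex.abs_re_le_norm ((S:ℂ) + y * I)
        rwa [hre, hS] at this
    have hlim : Filter.Tendsto (fun T => 2 * ((B T + ‖g 0‖ * (1 / T)) * |a - (-b)|)) Filter.atTop (nhds 0) := by
      have h1 : Filter.Tendsto (fun T : ℝ => 1 / T) Filter.atTop (nhds 0) := by
        simpa using tendsto_inv_atTop_zero (𝕜 := ℝ)
      have := ((hB.add (h1.const_mul ‖g 0‖)).mul_const |a - (-b)|).const_mul 2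
      simpa using this
    apply squeeze_zero_norm' _ hlim
    filter_upwards [Filter.eventually_ge_atTop 2] with T hT
    have e1 := hbound T T hT (abs_of_pos (by linarith))
    have e2 := hbound (-T) T hT (by rw [abs_neg]; exact abs_of_pos (by linarith))
    refine (norm_sub_le _ _).trans ?_
    rw [norm_smul, norm_smul, Complex.norm_I, one_mul, one_mul]
    linarith
  have hrect : ∀ T : ℝ, ((∫ x in (-T)..T, g (x + (-b:ℝ) * I) / (x + (-b:ℝ) * I)) -
      g 0 * (-(2 * Real.arctan (T / (-b)) : ℝ) * I)) -
      ((∫ x in (-T)..T, g (x + a * I) / (x + a * I)) - g 0 * (-(2 * Real.arctan (T / a) : ℝ) * I))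
      + V T = 0 := by
    intro T
    have h := Complex.integral_boundary_rect_eq_zero_of_differentiableOn (dslope g 0)
      ⟨-T, -b⟩ ⟨T, a⟩ (hH.mono (by
        intro ζ hζ
        have h2 := hζ.2
        simp only [Set.mem_preimage] at h2
        rw [Set.uIcc_of_le (by linarith)] at h2
        exact hsub ζ h2.1 h2.2))
    simp only at h
    rw [← hline (-b) (by linarith) hbot T, ← hline a ha.ne' htop T]
    simp only [V]
    linear_combination h
  have harct : ∀ β : ℝ, 0 < β → Filter.Tendsto (fun T : ℝ => Real.arctan (T / β)) Filter.atTop (nhds (π/2)) := by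
    intro β hβ
    have h1 : Filter.Tendsto Real.arctan Filter.atTop (nhds (π/2)) :=
      Real.tendsto_arctan_atTop.mono_right nhdsWithin_le_nhds
    exact h1.comp (Filter.tendsto_id.atTop_div_const hβ)
  have hb1 := intervalIntegral_tendsto_integral hbot Filter.tendsto_neg_atTop_atBot Filter.tendsto_id
  have ht1 := intervalIntegral_tendsto_integral htop Filter.tendsto_neg_atTop_atBot Filter.tendsto_id
  have hc : ∀ β : ℝ, 0 < β → Filter.Tendsto (fun T : ℝ => g 0 * (-(2 * Real.arctan (T / β) : ℝ) * I)) Filter.atTop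
     (nhds (g 0 * (-(2 * (π/2) : ℝ) * I))) := by
    intro β hβ
    have h1 : Filter.Tendsto (fun T : ℝ => ((2 * Real.arctan (T / β) : ℝ) : ℂ)) Filter.atTop (nhds ((2 * (π/2) : ℝ) : ℂ)) :=
      (Complex.continuous_ofReal.tendsto _).comp ((harct β hβ).const_mul 2)
    exact (h1.neg.mul_const I).const_mul _
  have hlim := ((hb1.add (hc b hb)).sub (ht1.sub (hc a ha))).add hV
  have hzero := hlim.congr' (f₂ := fun _ => (0:ℂ)) (Filter.Eventually.of_forall fun T => by
    have h1 := hrect T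
    have h2 : ((2 * Real.arctan (T / (-b)) : ℝ) : ℂ) = -((2 * Real.arctan (T / b) : ℝ) : ℂ) := by
      rw [div_neg, Real.arctan_neg]; push_cast; ring
    rw [h2] at h1
    simp only [id]
    linear_combination h1)
  have := tendsto_nhds_unique hzero tendsto_const_nhds
  push_cast at this ⊢
  linear_combination this


lemma rr_le_one : rr ≤ 1 := by nlinarith [rr_sq, rr_pos]

/-- bound for the kernel on the lines -/
lemma kernel_bound (c c' : ℝ) (hc : 0 < c) (hc' : c < 1) (hc₁ : -(1/2) < c') (hc₂ : c' < 1/2) :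
    ∃ M > 0, ∃ k > 0, ∀ t x : ℝ, ‖Complex.exp (2 * π * I * (c + EE * t) * (c' + EF * x)) /
      DD (c + EE * t)‖ ≤ M * Real.exp (-(k * |t|)) * Real.exp (2 * π * rr * c * x) := by
  obtain ⟨δ, hδ, h⟩ := DD_line c hc hc'
  refine ⟨δ⁻¹, inv_pos.2 hδ, π * rr * (1 - 2 * |c'|), ?_, fun t x => ?_⟩
  · have : |c'| < 1/2 := abs_lt.2 ⟨hc₁, hc₂⟩
    have := Real.pi_pos
    have := rr_pos
    apply mul_pos (by positivity); linarith
  · rw [norm_div, Complex.norm_exp]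
    have hre : (2 * π * I * (c + EE * t) * (c' + EF * x)).re =
        2 * π * rr * c * x - 2 * π * rr * c' * t := by
      have : 2 * π * I * (c + EE * t) * (c' + EF * x) =
        ((2 * π * (c * c' + t * x) : ℝ) : ℂ) * I + ((2 * π * c' * t : ℝ) : ℂ) * (I * EE) +
        ((2 * π * c * x : ℝ) : ℂ) * (I * EF) := by
        push_cast
        linear_combination (2 * π * I * t * x) * EE_mul_EF
      rw [this]
      simp only [Complex.add_re, Complex.re_ofReal_mul, Complex.I_mul_re, EE_im, EF_im, Complex.I_re]
      ring
    rw [hre]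
    have h1 : 0 < δ * Real.exp (π * rr * |t|) := by positivity
    calc _ ≤ Real.exp (2 * π * rr * c * x - 2 * π * rr * c' * t) / (δ * Real.exp (π * rr * |t|)) := by
          gcongr; exact h t
      _ = δ⁻¹ * (Real.exp (2 * π * rr * c * x - 2 * π * rr * c' * t) * Real.exp (-(π * rr * |t|))) := by
          rw [Real.exp_neg]; field_simp
      _ ≤ δ⁻¹ * (Real.exp (-(π * rr * (1 - 2 * |c'|) * |t|)) * Real.exp (2 * π * rr * c * x)) := by
          rw [← Real.exp_add, ← Real.exp_add]
          apply mul_le_mul_of_nonneg_left _ (inv_pos.2 hδ).le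
          apply Real.exp_le_exp.2
          have h2 : -(c' * t) ≤ |c'| * |t| := by rw [← abs_mul]; exact neg_le_abs _
          have h3 : 0 < 2 * π * rr := by have := Real.pi_pos; have := rr_pos; positivity
          nlinarith [mul_le_mul_of_nonneg_left h2 h3.le]
      _ = _ := by ring

lemma DD_sub_one (u : ℂ) : DD (u - 1) = - DD u := by
  unfold DD
  have e1 : Complex.exp ((π : ℂ) * I * (u - 1)) = - Complex.exp ((π : ℂ) * I * u) := by
    rw [mul_sub, Complex.exp_sub, mul_one, Complex.exp_pi_mul_I]; ring
  have e2 : Complex.exp (-((π : ℂ) * I * (u - 1))) = - Complex.exp (-((π : ℂ) * I * u)) := by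
    rw [show -((π : ℂ) * I * (u - 1)) = -((π : ℂ) * I * u) + π * I by ring, Complex.exp_add,
      Complex.exp_pi_mul_I]; ring
  rw [e1, e2]; ring

lemma K_lemma (c c' : ℝ) (hc : 0 < c) (hc' : c < 1) (hc₁ : -(1/2) < c') (hc₂ : c' < 1/2) (x : ℝ) :
    ∫ t : ℝ, Complex.exp (2 * π * I * (c + EE * t) * (c' + EF * x)) / DD (c + EE * t) * EE =
      1 / (Complex.exp (-(2 * (π : ℂ) * I * (c' + EF * x))) + 1) := by
  have hπ := Real.pi_pos
  have hr := rr_pos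
  set z : ℂ := c' + EF * x with hz
  let S : ℂ → ℂ := fun ζ => DD (EE * ζ)
  have hSd : Differentiable ℂ S := by
    show Differentiable ℂ (fun ζ => DD (EE * ζ))
    unfold DD; fun_prop
  have hS0 : S 0 = 0 := by simp [S, DD]
  have hSder : HasDerivAt S (2 * π * I * EE) 0 := by
    have h1 : HasDerivAt (fun ζ : ℂ => (π : ℂ) * I * (EE * ζ)) (π * I * EE) 0 := by
      have := (hasDerivAt_id (0:ℂ)).const_mul ((π : ℂ) * I * EE)
      simp only [id, mul_one] at this
      exact this.congr_of_eventuallyEq (Filter.Eventually.of_forall fun y => by simp; ring)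
    have h2 := h1.cexp.sub h1.neg.cexp
    refine (h2.congr_deriv ?_)
    simp; ring
  let U : Set ℂ := {ζ | -rr < ζ.im ∧ ζ.im < rr}
  have hU : IsOpen U := (isOpen_lt continuous_const Complex.continuous_im).inter
    (isOpen_lt Complex.continuous_im continuous_const)
  have hSne : ∀ ζ ∈ U, ζ ≠ 0 → S ζ ≠ 0 := by
    intro ζ hζ hne h
    obtain ⟨n, hn⟩ := DD_eq_zero h
    have h1 : ζ = n * EF := by
      rw [← hn]; linear_combination (-ζ) * EE_mul_EF
    have h2 : ζ.im = -(n * rr) := by rw [h1]; simp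
    have h3 : -rr < ζ.im := hζ.1
    have h4 : ζ.im < rr := hζ.2
    rw [h2] at h3 h4
    have h5 : (n : ℝ) < 1 := by nlinarith
    have h6 : (-1 : ℝ) < n := by nlinarith
    have h7 : n < 1 := by exact_mod_cast h5
    have h8 : -1 < n := by exact_mod_cast h6
    have h9 : n = 0 := by omega
    rw [h9] at h1; simp at h1; exact hne h1
  have h0U : (0:ℂ) ∈ U := ⟨by simpa using hr, by simpa using hr⟩
  let d : ℂ → ℂ := dslope S 0
  have hd : DifferentiableOn ℂ d U :=
    (Complex.differentiableOn_dslope (hU.mem_nhds h0U)).2 hSd.differentiableOn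
  have hd0 : d 0 = 2 * π * I * EE := by simp only [d]; rw [dslope_same, hSder.deriv]
  have hdζ : ∀ ζ, ζ ≠ 0 → d ζ = S ζ / ζ := by
    intro ζ hζ
    simp only [d]
    rw [dslope_of_ne _ hζ, slope_def_field, hS0, sub_zero, sub_zero]
  have h2pi : (2 * π * I : ℂ) ≠ 0 := by simp [hπ.ne']
  have hdne : ∀ ζ ∈ U, d ζ ≠ 0 := by
    intro ζ hζ
    by_cases h : ζ = 0
    · rw [h, hd0]; exact mul_ne_zero h2pi EE_ne
    · rw [hdζ ζ h]; exact div_ne_zero (hSne ζ hζ h) h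
  let g : ℂ → ℂ := fun ζ => Complex.exp (2 * π * I * (EE * ζ) * z) * EE / d ζ
  have hg : DifferentiableOn ℂ g U := by
    apply DifferentiableOn.div _ hd hdne
    apply Differentiable.differentiableOn; fun_prop
  have hg0 : g 0 = 1 / (2 * π * I) := by
    simp only [g, hd0]; simp only [mul_zero, zero_mul, Complex.exp_zero, one_mul]
    field_simp [EE_ne]
  have hgζ : ∀ ζ, ζ ≠ 0 → g ζ / ζ = Complex.exp (2 * π * I * (EE * ζ) * z) / DD (EE * ζ) * EE := by
    intro ζ hζ
    simp only [g, hdζ ζ hζ, S]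
    field_simp
  -- the line integral
  obtain ⟨M, hM, k, hk, hbd⟩ := kernel_bound c c' hc hc' hc₁ hc₂
  let φ : ℝ → ℂ := fun t => Complex.exp (2 * π * I * (c + EE * t) * z) / DD (c + EE * t) * EE
  have hφ : Integrable φ := by
    have hi := ((integrable_exp_neg_abs hk).const_mul M).mul_const (Real.exp (2 * π * rr * c * x) * ‖EE‖)
    refine hi.mono' ?_ (Filter.Eventually.of_forall fun t => ?_)
    · apply Continuous.aestronglyMeasurable
      have h1 := DD_continuous
      have h2 := DD_line_ne c hc hc'
      simp only [φ]
      apply Continuous.mul _ continuous_const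
      apply Continuous.div (by fun_prop) (by fun_prop) h2
    · simp only [φ]
      rw [norm_mul, ← mul_assoc]
      apply mul_le_mul_of_nonneg_right (hbd t x) (norm_nonneg _)
  have hnei : ∀ β : ℝ, β ≠ 0 → ∀ x : ℝ, (x : ℂ) + β * I ≠ 0 := by
    intro β hβ x h
    have := congrArg Complex.im h
    simp at this; exact hβ this
  have hbotfun : ∀ y : ℝ, g (y + (-(rr * c) : ℝ) * I) / (y + (-(rr * c) : ℝ) * I) = φ (y + -(rr * c)) := by
    intro y
    rw [hgζ _ (hnei _ (by have := mul_pos hr hc; linarith) _)]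
    have e : EE * ((y : ℂ) + (-(rr * c) : ℝ) * I) = c + EE * ((y + -(rr * c) : ℝ) : ℂ) := by
      have : ((y : ℂ) + (-(rr * c) : ℝ) * I) = c * EF + ((y + -(rr * c) : ℝ) : ℂ) := by
        apply Complex.ext <;> simp <;> ring
      rw [this]; linear_combination (c : ℂ) * EE_mul_EF
    rw [e]
  have htopfun : ∀ y : ℝ, g (y + (rr * (1 - c) : ℝ) * I) / (y + (rr * (1 - c) : ℝ) * I) =
      (-Complex.exp (-(2 * (π : ℂ) * I * z))) * φ (y + (rr * (1 - c))) := by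
    intro y
    rw [hgζ _ (hnei _ (by have := mul_pos hr (sub_pos.2 hc'); linarith) _)]
    have e : EE * ((y : ℂ) + (rr * (1 - c) : ℝ) * I) = c + EE * ((y + (rr * (1 - c)) : ℝ) : ℂ) - 1 := by
      have : ((y : ℂ) + (rr * (1 - c) : ℝ) * I) = (c - 1) * EF + ((y + (rr * (1 - c)) : ℝ) : ℂ) := by
        apply Complex.ext <;> simp <;> ring
      rw [this]; linear_combination (c - 1 : ℂ) * EE_mul_EF
    rw [e, DD_sub_one]
    simp only [φ]
    rw [show ∀ u : ℂ, 2 * π * I * (u - 1) * z = -(2 * (π : ℂ) * I * z) + 2 * π * I * u * z by intro u; ring,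
      Complex.exp_add]
    rw [div_neg]; ring
  have hbot : Integrable fun y : ℝ => g (y + (-(rr * c) : ℝ) * I) / (y + (-(rr * c) : ℝ) * I) := by
    simp_rw [hbotfun]; exact hφ.comp_add_right _
  have htop : Integrable fun y : ℝ => g (y + (rr * (1 - c) : ℝ) * I) / (y + (rr * (1 - c) : ℝ) * I) := by
    simp_rw [htopfun]; exact (hφ.comp_add_right _).const_mul _
  let B : ℝ → ℝ := fun T => 2 * Real.exp (2 * π * (|c'| * rr * (T + 1) + |x|) - π * rr * (T - 1)) * ‖EE‖
  have habs : |c'| < 1/2 := abs_lt.2 ⟨hc₁, hc₂⟩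
  have hB : Filter.Tendsto B Filter.atTop (nhds 0) := by
    have h1 : Filter.Tendsto (fun T : ℝ => (π * rr * (1 - 2 * |c'|)) * T) Filter.atTop Filter.atTop :=
      Filter.tendsto_id.const_mul_atTop (by apply mul_pos (by positivity); linarith)
    have h2 := (Real.tendsto_exp_neg_atTop_nhds_zero.comp h1).mul_const
      (2 * Real.exp (2 * π * (|c'| * rr + |x|) + π * rr) * ‖EE‖)
    rw [zero_mul] at h2
    refine h2.congr fun T => ?_
    simp only [B, Function.comp]
    rw [show 2 * π * (|c'| * rr * (T + 1) + |x|) - π * rr * (T - 1) =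
      -(π * rr * (1 - 2 * |c'|) * T) + (2 * π * (|c'| * rr + |x|) + π * rr) by ring,
      Real.exp_add (-(π * rr * (1 - 2 * |c'|) * T)) (2 * π * (|c'| * rr + |x|) + π * rr)]
    ring
  have hrc : rr * c ≤ rr := by nlinarith
  have hrc' : rr * (1 - c) ≤ rr := by nlinarith
  have hvert : ∀ ζ : ℂ, -(rr * c) ≤ ζ.im → ζ.im ≤ rr * (1 - c) → 2 ≤ |ζ.re| → ‖g ζ / ζ‖ ≤ B |ζ.re| := by
    intro ζ h1 h2 h3
    have hζ : ζ ≠ 0 := by intro h; rw [h] at h3; simp at h3; linarith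
    rw [hgζ ζ hζ, norm_mul, norm_div]
    simp only [B]
    apply mul_le_mul_of_nonneg_right _ (norm_nonneg _)
    have him : |ζ.im| ≤ 1 := by
      rw [abs_le]; constructor <;> linarith [rr_le_one]
    have hEim : (EE * ζ).im = rr * (ζ.re + ζ.im) := by simp; ring
    have hDlow : Real.exp (π * rr * (|ζ.re| - 1)) / 2 ≤ ‖DD (EE * ζ)‖ := by
      refine le_trans ?_ (DD_lower _)
      have h4 : rr * (|ζ.re| - 1) ≤ |(EE * ζ).im| := by
        rw [hEim, abs_mul, abs_of_pos hr]
        apply mul_le_mul_of_nonneg_left _ hr.le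
        have := abs_sub_abs_le_abs_sub ζ.re (-ζ.im)
        rw [abs_neg, sub_neg_eq_add] at this
        linarith
      have h5 : π * rr * (|ζ.re| - 1) ≤ π * |(EE * ζ).im| := by
        rw [mul_assoc]; exact mul_le_mul_of_nonneg_left h4 hπ.le
      have h6 : 1 ≤ π * |(EE * ζ).im| := by nlinarith [pi_rr]
      have h7 := exp_neg_le_half h6
      have h8 := Real.exp_le_exp.2 h5
      have h9 : 1 ≤ Real.exp (π * |(EE * ζ).im|) := Real.one_le_exp (by linarith)
      linarith
    have hN : ‖Complex.exp (2 * π * I * (EE * ζ) * z)‖ ≤ Real.exp (2 * π * (|c'| * rr * (|ζ.re| + 1) + |x|)) := by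
      rw [Complex.norm_exp]
      apply Real.exp_le_exp.2
      have e1 : 2 * π * I * (EE * ζ) * z = ((2 * π : ℝ) : ℂ) * (I * ((c' : ℝ) * (EE * ζ) + (x : ℝ) * ζ)) := by
        rw [hz]; push_cast
        linear_combination (2 * π * I * ζ * x) * EE_mul_EF
      rw [e1, Complex.re_ofReal_mul]
      apply mul_le_mul_of_nonneg_left _ (by positivity)
      rw [Complex.I_mul_re, Complex.add_im, Complex.im_ofReal_mul, Complex.im_ofReal_mul, hEim]
      have f1 : -(x * ζ.im) ≤ |x| := by
        calc -(x * ζ.im) ≤ |x * ζ.im| := neg_le_abs _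
          _ = |x| * |ζ.im| := abs_mul _ _
          _ ≤ |x| * 1 := by gcongr
          _ = |x| := mul_one _
      have f2 : -(c' * (rr * (ζ.re + ζ.im))) ≤ |c'| * rr * (|ζ.re| + 1) := by
        calc -(c' * (rr * (ζ.re + ζ.im))) ≤ |c' * (rr * (ζ.re + ζ.im))| := neg_le_abs _
          _ = |c'| * rr * |ζ.re + ζ.im| := by rw [abs_mul, abs_mul, abs_of_pos hr]; ring
          _ ≤ |c'| * rr * (|ζ.re| + 1) := by
            gcongr
            exact (abs_add_le _ _).trans (by linarith)
      linarith
    calc _ ≤ Real.exp (2 * π * (|c'| * rr * (|ζ.re| + 1) + |x|)) / (Real.exp (π * rr * (|ζ.re| - 1)) / 2) := by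
          gcongr
      _ = _ := by rw [Real.exp_sub]; field_simp
  have hfin := strip_residue (mul_pos hr (sub_pos.2 hc')) (mul_pos hr hc) g U hU
    (fun ζ h1 h2 => by
      constructor
      · have := mul_lt_mul_of_pos_left hc' hr; linarith
      · have := mul_pos hr hc; linarith) hg hbot htop B hB hvert
  simp_rw [hbotfun, htopfun] at hfin
  rw [integral_const_mul, integral_add_right_eq_self φ, integral_add_right_eq_self φ, hg0,
    mul_one_div_cancel h2pi] at hfin
  rw [eq_div_iff (den2_ne c' hc₁ hc₂ x)]
  show (∫ t, φ t) * (Complex.exp (-(2 * (π : ℂ) * I * z)) + 1) = 1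
  linear_combination hfin


lemma mordell (c c' : ℝ) (hc : 0 < c) (hc' : c < 1) (hc₁ : -(1/2) < c') (hc₂ : c' < 1/2)
    (β : ℝ) (hβ : 0 < β) (hβ2 : β ^ 2 = 2 * π) (w : ℝ) :
    ∫ t : ℝ, Complex.exp ((π : ℂ) * I * (c + EE * t) ^ 2) / DD (c + EE * t) * EE *
        Complex.exp (-((β : ℂ) * EE * (c + EE * t) * w)) =
      ∫ x : ℝ, Complex.exp (-((π : ℂ) * I * (c' + EF * x) ^ 2) - (w : ℂ) ^ 2 / 2 -
        β * EE * (c' + EF * x) * w) *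
        (1 / (Complex.exp (-(2 * (π : ℂ) * I * (c' + EF * x))) + 1)) := by
  have hβ2' : (β : ℂ) ^ 2 = 2 * π := by exact_mod_cast hβ2
  set h : ℝ := w / β with hh
  have hw : (w : ℂ) = β * h := by
    have : w = β * h := by rw [hh]; field_simp
    exact_mod_cast this
  obtain ⟨M, hM, k, hk, hbd⟩ := kernel_bound c c' hc hc' hc₁ hc₂
  let P : ℝ → ℂ := fun x => Complex.exp (-((π : ℂ) * I * (c' + EF * x) ^ 2) - (w : ℂ) ^ 2 / 2 -
        β * EE * (c' + EF * x) * w)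
  let f : ℝ → ℝ → ℂ := fun t x => P x *
    (Complex.exp (2 * π * I * (c + EE * t) * (c' + EF * x)) / DD (c + EE * t) * EE)
  have h1 : ∀ t : ℝ, Complex.exp ((π : ℂ) * I * (c + EE * t) ^ 2) / DD (c + EE * t) * EE *
        Complex.exp (-((β : ℂ) * EE * (c + EE * t) * w)) = ∫ x : ℝ, f t x := by
    intro t
    set u : ℂ := c + EE * t
    rw [← gauss_lemma (c' + EF * h) u]
    rw [div_mul_eq_mul_div, div_mul_eq_mul_div, mul_assoc, mul_div_assoc, ← integral_mul_const]
    congr 1; ext x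
    simp only [f, P]
    rw [show ∀ A B C D E : ℂ, A * (E * B / C) = (A * B) * (E / C) by intros; ring,
      show ∀ A B C D : ℂ, A * (B / C * D) = (A * B) * (D / C) by intros; ring]
    rw [← Complex.exp_add, ← Complex.exp_add]
    congr 2
    rw [hw]
    linear_combination (-2 * π * (c' + EF * x) * h + 2 * π * u * h) * I_mul_EF +
      (- EE * u * h + h ^ 2 / 2 + EE * (c' + EF * x) * h) * hβ2' - π * I * h ^ 2 * EF_sq +
      π * h ^ 2 * I_sq
    exact 0
  have hPi : Integrable fun x : ℝ => ‖P x‖ * Real.exp (2 * π * rr * c * x) := by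
    have h2 := ((gauss_integrable (c' : ℂ) (-(β * EE * EF * w) + (2 * π * rr * c : ℝ))).const_mul
      (Complex.exp (- (w : ℂ) ^ 2 / 2 - β * EE * c' * w))).norm
    refine h2.congr (Filter.Eventually.of_forall fun x => ?_)
    simp only [P]
    rw [← Complex.exp_add]
    rw [show Real.exp (2 * π * rr * c * x) = ‖Complex.exp ((2 * π * rr * c * x : ℝ) : ℂ)‖ by
      rw [Complex.norm_exp, Complex.ofReal_re], ← norm_mul, ← Complex.exp_add]
    congr 2
    push_cast
    ring
  have h_integrable : Integrable (Function.uncurry f) (volume.prod volume) := by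
    have h3 := ((integrable_exp_neg_abs hk).const_mul M).mul_prod (hPi.mul_const ‖EE‖)
    refine h3.mono' ?_ (Filter.Eventually.of_forall ?_)
    · apply Measurable.aestronglyMeasurable
      have := DD_continuous.measurable
      simp only [Function.uncurry_def, f, P]
      fun_prop
    · rintro ⟨t, x⟩
      simp only [Function.uncurry, f]
      rw [norm_mul, norm_mul]
      calc _ ≤ ‖P x‖ * ((M * Real.exp (-(k * |t|)) * Real.exp (2 * π * rr * c * x)) * ‖EE‖) := by
            gcongr; exact hbd t x
        _ = _ := by ring
  simp_rw [h1]
  rw [integral_integral_swap h_integrable]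
  congr 1; ext x
  simp only [f]
  rw [integral_const_mul, K_lemma c c' hc hc' hc₁ hc₂ x]

lemma final_bound (c' : ℝ) (hc₁ : -(1/2) < c') (hc₂ : c' < 1/2)
    (β : ℝ) (hβ : 0 < β) (hβ2 : β ^ 2 = 2 * π) (w x : ℝ) (hw : 0 < w) :
    ‖Complex.exp (-((π : ℂ) * I * (c' + EF * x) ^ 2) - (w : ℂ) ^ 2 / 2 -
        β * EE * (c' + EF * x) * w)‖ * Real.exp (2 * π * rr * x) ≤
      Real.exp (2 * π) * Real.exp (-(π * rr * |x|)) * Real.exp (-(β * rr / 2 * w)) := by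
  have hr := rr_pos
  have hπ := Real.pi_pos
  rw [Complex.norm_exp, ← Real.exp_add, ← Real.exp_add, ← Real.exp_add]
  apply Real.exp_le_exp.2
  have hre : (-((π : ℂ) * I * (c' + EF * x) ^ 2) - (w : ℂ) ^ 2 / 2 -
        β * EE * (c' + EF * x) * w).re = -2 * π * c' * rr * x - π * x ^ 2 - w ^ 2 / 2 -
        β * c' * rr * w - β * x * w := by
    have : -((π : ℂ) * I * (c' + EF * x) ^ 2) - (w : ℂ) ^ 2 / 2 - β * EE * (c' + EF * x) * w =
      ((- (π * c' ^ 2) : ℝ) : ℂ) * I + ((-2 * π * c' * x - β * c' * w : ℝ) : ℂ) * EE +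
        ((- π * x ^ 2 - w ^ 2 / 2 - β * x * w : ℝ) : ℂ) := by
      push_cast
      linear_combination (-2 * π * c' * x) * I_mul_EF - π * I * x ^ 2 * EF_sq + π * x ^ 2 * I_sq -
        β * x * w * EE_mul_EF
    rw [this]
    simp only [Complex.add_re, Complex.re_ofReal_mul, EE_re, Complex.I_re, Complex.ofReal_re]
    ring
  rw [hre]
  have hβr : (β * rr) ^ 2 = π := by
    rw [mul_pow, hβ2, pow_two, rr_sq]; ring
  have key : ∀ e : ℝ, (e = 1/2 ∨ e = -(1/2)) →
      -2 * π * c' * rr * x - π * x ^ 2 - w ^ 2 / 2 - β * c' * rr * w - β * x * w + 2 * π * rr * x ≤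
        2 * π - 2 * e * π * rr * x - (1 + e) * (β * rr) * w := by
    intro e he
    have hsq : (β * rr * (1 - c' + e)) ^ 2 ≤ 4 * π := by
      rw [mul_pow, hβr]
      have : (1 - c' + e) ^ 2 ≤ 4 := by rcases he with rfl | rfl <;> nlinarith
      nlinarith
    have hsq2 := sq_nonneg (β * x + w - β * rr * (1 - c' + e))
    have expand : (β * x + w - β * rr * (1 - c' + e)) ^ 2 = 2 * π * x ^ 2 + 2 * β * x * w + w ^ 2
       - 4 * π * rr * (1 - c' + e) * x - 2 * β * rr * (1 - c' + e) * w
       + (β * rr * (1 - c' + e)) ^ 2 := by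
      linear_combination (x ^ 2 - 2 * rr * (1 - c' + e) * x) * hβ2
    rw [expand] at hsq2
    linarith
  have hbw : 0 < β * rr * w := by positivity
  rcases abs_cases x with ⟨h, _⟩ | ⟨h, _⟩ <;> rw [h]
  · have := key (1/2) (Or.inl rfl); linarith
  · have := key (-(1/2)) (Or.inr rfl); linarith


/-- The representation of `∫_{0↗1} e^{iπu²} u^{-s}/(e^{iπu} - e^{-iπu}) du` by an
integral over the line `-1/2 ↘ 1/2` whose kernel is the real integral representation
of the parabolic cylinder function `U(s - 1/2, √(2π) e^{iπ/4} u)`. -/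
theorem riemann_siegel_parabolic_cylinder (s : ℂ) (hs : 1 < s.re)
    (c c' : ℝ) (hc : 0 < c) (hc' : c < 1) (hc₁ : -(1/2) < c') (hc₂ : c' < 1/2) :
    lineInt c (π/4) (fun u =>
      Complex.exp ((π : ℂ) * Complex.I * u ^ 2) * u ^ (-s) /
        (Complex.exp ((π : ℂ) * Complex.I * u) - Complex.exp (-((π : ℂ) * Complex.I * u)))) =
    (2 * (π : ℂ)) ^ (s / 2) * Complex.exp ((π : ℂ) * Complex.I * (s + 1) / 4) *
      (Complex.Gamma s)⁻¹ *
      lineInt c' (-(π/4)) (fun u =>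
        Complex.exp (-((π : ℂ) * Complex.I * u ^ 2)) /
          (Complex.exp (-(2 * (π : ℂ) * Complex.I * u)) + 1) *
        ∫ w in Set.Ioi (0 : ℝ),
          Complex.exp (-((w : ℂ) ^ 2 / 2) -
              (Real.sqrt (2 * π) : ℂ) * Complex.exp ((π : ℂ) * Complex.I / 4) * u * (w : ℂ)) *
            (w : ℂ) ^ (s - 1)) := by
  have hr := rr_pos
  have hπ := Real.pi_pos
  unfold lineInt
  rw [exp_EE, exp_EF, exp_EE']
  have hβ : 0 < Real.sqrt (2 * π) := by positivity
  have hβ2 : Real.sqrt (2 * π) ^ 2 = 2 * π := Real.sq_sqrt (by positivity)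
  have hmel := fun t : ℝ => mellin_lemma s hs c hc t
  generalize Real.sqrt (2 * π) = β at *
  have hexp : Complex.exp ((π : ℂ) * I * (s + 1) / 4) = Complex.exp ((π : ℂ) * I * s / 4) * EE := by
    rw [← exp_EE', ← Complex.exp_add]; congr 1; ring
  rw [hexp]
  set C : ℂ := (2 * (π : ℂ)) ^ (s / 2) * Complex.exp ((π : ℂ) * I * s / 4) * (Complex.Gamma s)⁻¹ with hC
  let f : ℝ → ℝ → ℂ := fun t w =>
    (Complex.exp ((π : ℂ) * I * (c + EE * t) ^ 2) / DD (c + EE * t) * EE) *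
      ((w : ℂ) ^ (s - 1) * Complex.exp (-((β : ℂ) * EE * (c + EE * t) * w)))
  let g : ℝ → ℝ → ℂ := fun x w =>
    (Complex.exp (-((π : ℂ) * I * (c' + EF * x) ^ 2) - (w : ℂ) ^ 2 / 2 -
        β * EE * (c' + EF * x) * w) *
        (1 / (Complex.exp (-(2 * (π : ℂ) * I * (c' + EF * x))) + 1))) * (w : ℂ) ^ (s - 1)
  have hL : ∀ t : ℝ, Complex.exp ((π : ℂ) * I * (c + EE * t) ^ 2) * ((c : ℂ) + EE * t) ^ (-s) /
        (Complex.exp ((π : ℂ) * I * (c + EE * t)) - Complex.exp (-((π : ℂ) * I * (c + EE * t)))) * EE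
      = C * ∫ w in Set.Ioi (0:ℝ), f t w := by
    intro t
    rw [hmel t]
    simp only [f]
    rw [integral_const_mul]
    change _ / DD (c + EE * t) * EE = _
    ring
  have hR : ∀ x : ℝ, Complex.exp (-((π : ℂ) * I * (c' + EF * x) ^ 2)) /
          (Complex.exp (-(2 * (π : ℂ) * I * (c' + EF * x))) + 1) *
        (∫ w in Set.Ioi (0 : ℝ),
          Complex.exp (-((w : ℂ) ^ 2 / 2) - (β : ℂ) * EE * (c' + EF * x) * (w : ℂ)) *
            (w : ℂ) ^ (s - 1)) * EF = EF * ∫ w in Set.Ioi (0:ℝ), g x w := by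
    intro x
    rw [mul_comm _ EF, ← integral_const_mul]
    congr 2; ext w
    simp only [g]
    rw [show -((π : ℂ) * I * (c' + EF * x) ^ 2) - (w : ℂ) ^ 2 / 2 - β * EE * (c' + EF * x) * w =
      -((π : ℂ) * I * (c' + EF * x) ^ 2) + (-((w : ℂ) ^ 2 / 2) - (β : ℂ) * EE * (c' + EF * x) * (w : ℂ))
      by ring, Complex.exp_add]
    ring
  have hfi : Integrable (Function.uncurry f) (volume.prod (volume.restrict (Set.Ioi (0:ℝ)))) := by
    obtain ⟨δ, hδ, hD⟩ := DD_line c hc hc'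
    have h1 := (((gauss_integrable' (c:ℂ)).norm.const_mul δ⁻¹).mul_const ‖EE‖).mul_prod
      (ioi_int (q := s.re - 1) (b := β * (rr * c)) (by linarith) (by positivity))
    refine h1.mono' ?_ ?_
    · apply Measurable.aestronglyMeasurable
      have := DD_continuous.measurable
      simp only [Function.uncurry_def, f]
      fun_prop
    · have hae : ∀ᵐ p : ℝ × ℝ ∂(volume.prod (volume.restrict (Set.Ioi (0:ℝ)))), 0 < p.2 := by
        have : ∀ᵐ w : ℝ ∂(volume.restrict (Set.Ioi (0:ℝ))), 0 < w := ae_restrict_mem measurableSet_Ioi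
        exact Measure.quasiMeasurePreserving_snd.ae this
      filter_upwards [hae] with p hp
      obtain ⟨t, w⟩ := p
      simp only [Function.uncurry, f]
      have hp' : 0 < w := hp
      have hre : ((β : ℂ) * EE * (c + EE * t)).re = β * (rr * c) := by
        have h0 : (EE * ((c : ℂ) + EE * t)).re = rr * c := by simp; ring
        rw [mul_assoc, Complex.re_ofReal_mul, h0]
      rw [norm_mul, norm_mul, norm_div, norm_kernel hp', hre]
      have hδD : δ ≤ ‖DD (c + EE * t)‖ := by
        refine le_trans ?_ (hD t)
        have : 1 ≤ Real.exp (π * rr * |t|) := Real.one_le_exp (by positivity)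
        nlinarith
      gcongr
      rw [div_eq_mul_inv, mul_comm]
      gcongr
  have hgi : Integrable (Function.uncurry g) (volume.prod (volume.restrict (Set.Ioi (0:ℝ)))) := by
    obtain ⟨δ, hδ, hD⟩ := den2_line c' hc₁ hc₂
    have h1 := ((integrable_exp_neg_abs (k := π * rr) (by positivity)).const_mul
      (δ⁻¹ * Real.exp (2 * π))).mul_prod
      (ioi_int (q := s.re - 1) (b := β * rr / 2) (by linarith) (by positivity))
    refine h1.mono' ?_ ?_
    · apply Measurable.aestronglyMeasurable
      simp only [Function.uncurry_def, g]
      fun_prop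
    · have hae : ∀ᵐ p : ℝ × ℝ ∂(volume.prod (volume.restrict (Set.Ioi (0:ℝ)))), 0 < p.2 := by
        have : ∀ᵐ w : ℝ ∂(volume.restrict (Set.Ioi (0:ℝ))), 0 < w := ae_restrict_mem measurableSet_Ioi
        exact Measure.quasiMeasurePreserving_snd.ae this
      filter_upwards [hae] with p hp
      obtain ⟨x, w⟩ := p
      have hp' : 0 < w := hp
      simp only [Function.uncurry, g]
      rw [norm_mul, norm_mul, norm_div, norm_one, Complex.norm_cpow_eq_rpow_re_of_pos hp',
        Complex.sub_re, Complex.one_re]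
      have hb := final_bound c' hc₁ hc₂ β hβ hβ2 w x hp'
      have hd : 1 / ‖Complex.exp (-(2 * (π : ℂ) * I * (c' + EF * x))) + 1‖ ≤
          δ⁻¹ * Real.exp (2 * π * rr * x) := by
        calc _ ≤ 1 / (δ * Real.exp (-(2 * π * rr * x))) := by
              apply one_div_le_one_div_of_le (by positivity) (hD x)
          _ = _ := by rw [Real.exp_neg]; field_simp
      have hw0 : 0 ≤ w ^ (s.re - 1) := by positivity
      set N := ‖Complex.exp (-((π : ℂ) * I * (c' + EF * x) ^ 2) - (w : ℂ) ^ 2 / 2 -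
        β * EE * (c' + EF * x) * w)‖ with hN
      have hN0 : 0 ≤ N := norm_nonneg _
      calc _ ≤ N * (δ⁻¹ * Real.exp (2 * π * rr * x)) * w ^ (s.re - 1) := by gcongr
        _ = δ⁻¹ * (N * Real.exp (2 * π * rr * x)) * w ^ (s.re - 1) := by ring
        _ ≤ δ⁻¹ * (Real.exp (2 * π) * Real.exp (-(π * rr * |x|)) * Real.exp (-(β * rr / 2 * w))) *
              w ^ (s.re - 1) := by gcongr
        _ = _ := by ring
  simp_rw [hL, hR]
  rw [integral_const_mul, integral_const_mul, integral_integral_swap hfi, integral_integral_swap hgi]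
  have hmain : ∀ w : ℝ, ∫ t : ℝ, f t w = ∫ x : ℝ, g x w := by
    intro w
    simp only [f, g]
    rw [integral_mul_const, ← mordell c c' hc hc' hc₁ hc₂ β hβ hβ2 w, ← integral_mul_const]
    congr 1; ext t; ring
  simp_rw [hmain]
  rw [hC]
  linear_combination (-((2 * (π : ℂ)) ^ (s / 2) * Complex.exp ((π : ℂ) * I * s / 4) * (Complex.Gamma s)⁻¹) * (∫ w in Set.Ioi (0:ℝ), ∫ x : ℝ, g x w)) * EE_mul_EF
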